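/- Every spectral value z ∈ σ(K) with z ≠ λ satisfies |z| < λ; moreover there is a uniform spectral gap: sup{|z| : z ∈ σ(K) ∖ {λ}} < λ. -/

import Mathlib

open MeasureTheory
open scoped ENNReal

noncomputable section

/-- Iterated integral kernels: `iterKernel μ k n` is the kernel `k_{n+1}` of the paper,
with `iterKernel μ k 0 = k₁ = k` and
`k_{N+1}(x,y) = ∫ k_N(x,z) k(z,y) dμ(z)`. -/
def iterKernel {Ω : Type*} [MeasurableSpace Ω] (μ : Measure Ω) (k : Ω → Ω → ℝ) :
    ℕ → Ω → Ω → ℝ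
  | 0 => k
  | n + 1 => fun x y => ∫ z, iterKernel μ k n x z * k z y ∂μ

/-! A square-integrable kernel gives a Hilbert–Schmidt, hence compact, operator `K`, so every
nonzero spectral value is an eigenvalue and only finitely many have modulus at least a given
`δ > 0`. The gap therefore follows once `λ` is the only spectral value of modulus `λ`.

Let `K f = w • f` with `|w| = λ`. Then `u = |f|` satisfies `λ u ≤ K u`, that is,
`λ ⟨u, a⟩ ≤ ⟨u, K* a⟩` for `a ≥ 0`. For `s ↓ λ` the positive resolvent of `K*` at `s` then blows up
on `u`, and normalising yields an eigenvector `v ≥ 0` of `K*` at `λ`. Pairing with `v` annihilates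
`K u - λ u ≥ 0`, and so does pairing with its image under the strictly positive power `K ^ (N + 1)`;
hence `K u = λ u`. Now `|K ^ (N + 1) f| = K ^ (N + 1) |f|`: equality in the triangle inequality for
a strictly positive kernel makes the phase of `f` constant, so `u` is a multiple of `f` and `w = λ`.

Positivity of `λ` comes from primitivity alone: the strictly positive kernel of `K ^ (N + 1)`
dominates some `ε > 0` on most of a set of finite positive measure, so that `K ^ (N + 1) g ≥ c g`
with `c > 0` for the indicator `g` of a suitable subset. -/

open Filter Topology

section SpectralRadius

open scoped NNReal

lemma nnnorm_le_spectralRadius {𝕜 A : Type*} [NormedField 𝕜] [Ring A] [Algebra 𝕜 A] {a : A}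
    {z : 𝕜} (hz : z ∈ spectrum 𝕜 a) : (‖z‖₊ : ℝ≥0∞) ≤ spectralRadius 𝕜 a :=
  le_iSup₂ (α := ℝ≥0∞) z hz

lemma spectralRadius_ne_top {𝕜 A : Type*} [NormedField 𝕜] [NormedRing A] [NormedAlgebra 𝕜 A]
    [CompleteSpace A] (a : A) : spectralRadius 𝕜 a ≠ ⊤ := by
  refine ((spectrum.spectralRadius_le_pow_nnnorm_pow_one_div 𝕜 a 0).trans_lt ?_).ne
  simp [ENNReal.mul_lt_top_iff]

lemma spectralRadius_star {A : Type*} [NormedRing A] [NormedAlgebra ℂ A] [StarRing A]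
    [StarModule ℂ A] (a : A) : spectralRadius ℂ (star a) = spectralRadius ℂ a := by
  have hle (b : A) : spectralRadius ℂ (star b) ≤ spectralRadius ℂ b := iSup₂_le fun z hz ↦ by
    rw [spectrum.map_star, Set.mem_star] at hz
    simpa using nnnorm_le_spectralRadius hz
  exact (hle a).antisymm (by simpa using hle (star a))

lemma spectralRadius_pos_of_pow {A : Type*} [NormedRing A] [NormedAlgebra ℂ A] [CompleteSpace A]
    {a : A} {n : ℕ} (hn : n ≠ 0) (h : 0 < spectralRadius ℂ (a ^ n)) : 0 < spectralRadius ℂ a := by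
  have : Nontrivial A := by
    by_contra hA
    rw [not_nontrivial_iff_subsingleton] at hA
    exact h.ne' (spectrum.SpectralRadius.of_subsingleton _)
  obtain ⟨z, hz, hzr⟩ := spectrum.exists_nnnorm_eq_spectralRadius (a ^ n)
  rw [spectrum.map_pow] at hz
  obtain ⟨w, hw, rfl⟩ := hz
  have hw0 : w ≠ 0 := by
    rintro rfl
    simp [← hzr, hn] at h
  calc (0 : ℝ≥0∞) < ‖w‖₊ := by simpa using hw0
    _ ≤ spectralRadius ℂ a := nnnorm_le_spectralRadius hw

end SpectralRadius

section CompactOperator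

variable {𝕜 E : Type*} [NontriviallyNormedField 𝕜] [NormedAddCommGroup E] [NormedSpace 𝕜 E]

lemma exists_bounded_seq_one_le_norm_sub {V : ℕ → Submodule 𝕜 E} (hV : StrictMono V)
    (hclosed : ∀ n, IsClosed (V n : Set E)) :
    ∃ (R : ℝ) (x : ℕ → E), ∀ n, ‖x n‖ ≤ R ∧ x n ∈ V (n + 1) ∧ ∀ y ∈ V n, 1 ≤ ‖x n - y‖ := by
  obtain ⟨c, hc⟩ := NormedField.exists_one_lt_norm 𝕜
  have riesz (n : ℕ) :
      ∃ x, ‖x‖ ≤ ‖c‖ + 1 ∧ x ∈ V (n + 1) ∧ ∀ y ∈ V n, 1 ≤ ‖x - y‖ := by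
    have hproper : ∃ x : V (n + 1), x ∉ (V n).comap (V (n + 1)).subtype := by
      obtain ⟨x, hx, hxn⟩ := SetLike.exists_of_lt (hV n.lt_succ_self)
      exact ⟨⟨x, hx⟩, hxn⟩
    obtain ⟨x, hxR, hx⟩ := riesz_lemma_of_norm_lt hc (lt_add_one ‖c‖)
      ((hclosed n).preimage continuous_subtype_val) hproper
    exact ⟨x, hxR, x.2, fun y hy ↦ hx ⟨y, hV.monotone n.le_succ hy⟩ hy⟩
  choose x hx using riesz
  exact ⟨‖c‖ + 1, x, hx⟩

lemma exists_norm_map_sub_lt_of_isCompactOperator {T : E →L[𝕜] E} (hT : IsCompactOperator T)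
    {R : ℝ} {x : ℕ → E} (hx : ∀ n, ‖x n‖ ≤ R) {δ : ℝ} (hδ : 0 < δ) :
    ∃ m n, m < n ∧ ‖T (x n) - T (x m)‖ < δ := by
  obtain ⟨Q, hQ, hTQ⟩ :=
    IsCompactOperator.image_closedBall_subset_compact (f := (T : E →ₗ[𝕜] E)) hT R
  obtain ⟨y, -, φ, hφ, hlim⟩ := hQ.tendsto_subseq (fun n ↦ hTQ ⟨x n, by simpa using hx n, rfl⟩)
  obtain ⟨N, hN⟩ := Metric.cauchySeq_iff'.1 hlim.cauchySeq δ hδ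
  exact ⟨φ N, φ (N + 1), hφ N.lt_succ_self, by simpa [dist_eq_norm] using hN (N + 1) N.le_succ⟩

lemma map_sub_smul_mem_span_eigenvectors {T : Module.End 𝕜 E} {z : ℕ → 𝕜} {v : ℕ → E}
    (hv : ∀ n, T (v n) = z n • v n) (n : ℕ) {x : E}
    (hx : x ∈ Submodule.span 𝕜 (v '' Set.Iio (n + 1))) :
    T x - z n • x ∈ Submodule.span 𝕜 (v '' Set.Iio n) := by
  suffices Submodule.span 𝕜 (v '' Set.Iio (n + 1)) ≤
      (Submodule.span 𝕜 (v '' Set.Iio n)).comap (T - z n • LinearMap.id) from this hx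
  rw [Submodule.span_le]
  rintro _ ⟨j, hj, rfl⟩
  rcases (Nat.lt_succ_iff.1 hj).eq_or_lt with rfl | hjn
  · simp [hv]
  · have hvj : v j ∈ Submodule.span 𝕜 (v '' Set.Iio n) := Submodule.subset_span ⟨j, hjn, rfl⟩
    simpa [hv, ← sub_smul] using Submodule.smul_mem _ (z j - z n) hvj

lemma norm_le_norm_map_sub {T : E →L[𝕜] E} {V : Submodule 𝕜 E} {z : 𝕜} {x y : E}
    (hTx : T x - z • x ∈ V) (hy : y ∈ V) (hx : ∀ u ∈ V, 1 ≤ ‖x - u‖) : ‖z‖ ≤ ‖T x - y‖ := by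
  rcases eq_or_ne z 0 with rfl | hz
  · simp
  have hu : z⁻¹ • (y - (T x - z • x)) ∈ V := V.smul_mem _ (V.sub_mem hy hTx)
  calc ‖z‖ = ‖z‖ * 1 := (mul_one _).symm
    _ ≤ ‖z‖ * ‖x - z⁻¹ • (y - (T x - z • x))‖ := by gcongr; exact hx _ hu
    _ = ‖T x - y‖ := by
      rw [← norm_smul, smul_sub, smul_inv_smul₀ hz]
      congr 1
      abel

-- A Riesz sequence along the flag spanned by eigenvectors has `δ`-separated images.
theorem finite_setOf_mem_spectrum_le_norm [CompleteSpace 𝕜] [CompleteSpace E] {T : E →L[𝕜] E}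
    (hT : IsCompactOperator T) {δ : ℝ} (hδ : 0 < δ) :
    {z ∈ spectrum 𝕜 T | δ ≤ ‖z‖}.Finite := by
  by_contra hinf
  let z := Set.Infinite.natEmbedding _ hinf
  have hzδ (n : ℕ) : δ ≤ ‖(z n : 𝕜)‖ := (z n).2.2
  have heigen (n : ℕ) : ∃ v, Module.End.HasEigenvector (T : Module.End 𝕜 E) (z n : 𝕜) v :=
    ((hT.hasEigenvalue_iff_mem_spectrum (norm_pos_iff.1 (hδ.trans_le (hzδ n)))).2
      (z n).2.1).exists_hasEigenvector
  choose v hv using heigen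
  have hind : LinearIndependent 𝕜 v := Module.End.eigenvectors_linearIndependent' _
    (fun n ↦ (z n : 𝕜)) (Subtype.val_injective.comp z.injective) v hv
  let V (n : ℕ) : Submodule 𝕜 E := Submodule.span 𝕜 (v '' Set.Iio n)
  have hmono : Monotone V := fun m n hmn ↦
    Submodule.span_mono (Set.image_mono (Set.Iio_subset_Iio hmn))
  have hstrict : StrictMono V := strictMono_nat_of_lt_succ fun n ↦
    SetLike.lt_iff_le_and_exists.2 ⟨hmono n.le_succ, v n,
      Submodule.subset_span ⟨n, n.lt_succ_self, rfl⟩, hind.notMem_span_image (lt_irrefl n)⟩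
  have hclosed (n : ℕ) : IsClosed (V n : Set E) := by
    have := FiniteDimensional.span_of_finite 𝕜 ((Set.finite_Iio n).image v)
    exact (V n).closed_of_finiteDimensional
  obtain ⟨R, x, hx⟩ := exists_bounded_seq_one_le_norm_sub hstrict hclosed
  have hTx (n : ℕ) : T (x n) - (z n : 𝕜) • x n ∈ V n :=
    map_sub_smul_mem_span_eigenvectors (fun n ↦ (hv n).apply_eq_smul) n (hx n).2.1
  obtain ⟨m, n, hmn, hlt⟩ :=
    exists_norm_map_sub_lt_of_isCompactOperator hT (fun n ↦ (hx n).1) hδ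
  have hxm : x m ∈ V n := hmono hmn (hx m).2.1
  have hTxm : T (x m) ∈ V n := by
    simpa using add_mem (hmono hmn.le (hTx m)) (Submodule.smul_mem _ (z m : 𝕜) hxm)
  exact ((hzδ n).trans (norm_le_norm_map_sub (hTx n) hTxm (hx n).2.2)).not_gt hlt

lemma exists_lt_forall_norm_le_of_subset_spectrum [CompleteSpace 𝕜] [CompleteSpace E]
    {T : E →L[𝕜] E} (hT : IsCompactOperator T) {s : Set 𝕜} (hs : s ⊆ spectrum 𝕜 T) {ρ : ℝ}
    (hρ : 0 < ρ) (hsρ : ∀ z ∈ s, ‖z‖ < ρ) : ∃ r < ρ, ∀ z ∈ s, ‖z‖ ≤ r := by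
  have hfin : {z ∈ s | ρ / 2 ≤ ‖z‖}.Finite :=
    (finite_setOf_mem_spectrum_le_norm hT (half_pos hρ)).subset fun z hz ↦ ⟨hs hz.1, hz.2⟩
  obtain ⟨r, hr, hmax⟩ := Set.exists_max_image _ id ((hfin.image norm).insert (ρ / 2))
    (Set.insert_nonempty _ _)
  refine ⟨r, ?_, fun z hz ↦ ?_⟩
  · rcases hr with rfl | ⟨z, hz, rfl⟩
    exacts [half_lt_self hρ, hsρ z hz.1]
  · rcases le_total (ρ / 2) ‖z‖ with hle | hle
    · exact hmax _ (Or.inr ⟨z, ⟨hz, hle⟩, rfl⟩)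
    · exact hle.trans (hmax _ (Or.inl rfl))

end CompactOperator

section HilbertSchmidt

open scoped InnerProductSpace

variable {𝕜 H : Type*} [RCLike 𝕜] [NormedAddCommGroup H] [InnerProductSpace 𝕜 H]

/-- The Hilbert–Schmidt condition in Bessel form: the sums `∑ ‖K (e i)‖ ^ 2` over finite
orthonormal families `e` are bounded. -/
def IsHilbertSchmidt (K : H →L[𝕜] H) : Prop :=
  ∃ M : ℝ, ∀ (n : ℕ) (e : Fin n → H), Orthonormal 𝕜 e → ∑ i, ‖K (e i)‖ ^ 2 ≤ M

namespace IsHilbertSchmidt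

lemma bddAbove_card_le_norm {K : H →L[𝕜] H} (hK : IsHilbertSchmidt K) {δ : ℝ} (hδ : 0 < δ) :
    BddAbove {n | ∃ e : Fin n → H, Orthonormal 𝕜 e ∧ ∀ i, δ ≤ ‖K (e i)‖} := by
  obtain ⟨M, hM⟩ := hK
  refine ⟨⌊M / δ ^ 2⌋₊, ?_⟩
  rintro n ⟨e, he, hKe⟩
  refine Nat.le_floor ((le_div_iff₀ (by positivity)).2 ?_)
  calc (n : ℝ) * δ ^ 2 = ∑ _ : Fin n, δ ^ 2 := by simp
    _ ≤ ∑ i, ‖K (e i)‖ ^ 2 := by gcongr with i; exact hKe i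
    _ ≤ M := hM n e he

lemma exists_finiteDimensional_norm_le {K : H →L[𝕜] H} (hK : IsHilbertSchmidt K) {δ : ℝ}
    (hδ : 0 < δ) :
    ∃ F : Submodule 𝕜 H, FiniteDimensional 𝕜 F ∧ ∀ x ∈ Fᗮ, ‖K x‖ ≤ δ * ‖x‖ := by
  obtain ⟨n, ⟨e, he, hKe⟩, hmax⟩ := (hK.bddAbove_card_le_norm hδ).exists_isGreatest_of_nonempty
    ⟨0, Fin.elim0, ⟨fun i ↦ i.elim0, fun i ↦ i.elim0⟩, fun i ↦ i.elim0⟩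
  refine ⟨Submodule.span 𝕜 (Set.range e), FiniteDimensional.span_of_finite 𝕜
    (Set.finite_range e), fun x hx ↦ ?_⟩
  by_contra! hlt
  have hx0 : x ≠ 0 := by rintro rfl; simp at hlt
  have hxpos : 0 < ‖x‖ := norm_pos_iff.2 hx0
  let y : H := ((‖x‖⁻¹ : ℝ) : 𝕜) • x
  have hye (i : Fin n) : ⟪y, e i⟫_𝕜 = 0 := by
    have hxe : ⟪x, e i⟫_𝕜 = 0 :=
      inner_eq_zero_symm.1 (hx _ (Submodule.subset_span (Set.mem_range_self i)))
    rw [inner_smul_left, hxe, mul_zero]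
  have hy : Orthonormal 𝕜 (Matrix.vecCons y e) := by
    refine orthonormal_vecCons_iff.2 ⟨?_, hye, he⟩
    simp [y, norm_smul, hx0]
  have hKy : δ ≤ ‖K y‖ := by
    rw [map_smul, norm_smul, RCLike.norm_ofReal, abs_of_pos (inv_pos.2 hxpos), inv_mul_eq_div,
      le_div_iff₀ hxpos]
    exact hlt.le
  have hlarger : n + 1 ≤ n := hmax ⟨_, hy, Fin.cases hKy hKe⟩
  omega

variable [CompleteSpace H]

lemma exists_isCompactOperator_dist_comp_lt {K : H →L[𝕜] H} (hK : IsHilbertSchmidt K) {δ : ℝ}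
    (hδ : 0 < δ) :
    ∃ P : H →L[𝕜] H, IsCompactOperator P ∧ IsSelfAdjoint P ∧ dist K (K ∘L P) < δ := by
  obtain ⟨F, hF, hKF⟩ := hK.exists_finiteDimensional_norm_le (half_pos hδ)
  have : ProperSpace F := FiniteDimensional.proper 𝕜 F
  refine ⟨F.starProjection, ?_, isSelfAdjoint_starProjection F, ?_⟩
  · exact (isCompactOperator_of_locallyCompactSpace_dom (M₂ := F)
      F.orthogonalProjectionOnto).clm_comp F.subtypeL
  · rw [dist_eq_norm]
    refine (ContinuousLinearMap.opNorm_le_bound _ (half_pos hδ).le fun x ↦ ?_).trans_lt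
      (half_lt_self hδ)
    calc ‖(K - K ∘L F.starProjection) x‖ = ‖K (x - F.starProjection x)‖ := by simp
      _ ≤ δ / 2 * ‖x - F.starProjection x‖ := hKF _ (F.sub_starProjection_mem_orthogonal x)
      _ = δ / 2 * ‖Fᗮ.starProjection x‖ := by rw [F.starProjection_orthogonal_val x]
      _ ≤ δ / 2 * ‖x‖ := by gcongr; exact Fᗮ.norm_starProjection_apply_le x

lemma isCompactOperator {K : H →L[𝕜] H} (hK : IsHilbertSchmidt K) : IsCompactOperator K := by
  refine isClosed_setOfPred_isCompactOperator.closure_subset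
    (Metric.mem_closure_iff.2 fun δ hδ ↦ ?_)
  obtain ⟨P, hP, -, hKP⟩ := hK.exists_isCompactOperator_dist_comp_lt hδ
  exact ⟨K ∘L P, hP.clm_comp K, hKP⟩

lemma isCompactOperator_adjoint {K : H →L[𝕜] H} (hK : IsHilbertSchmidt K) :
    IsCompactOperator K.adjoint := by
  refine isClosed_setOfPred_isCompactOperator.closure_subset
    (Metric.mem_closure_iff.2 fun δ hδ ↦ ?_)
  obtain ⟨P, hP, hPadj, hKP⟩ := hK.exists_isCompactOperator_dist_comp_lt hδ
  refine ⟨P ∘L K.adjoint, hP.comp_clm _, ?_⟩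
  rw [← hPadj.adjoint_eq, ← ContinuousLinearMap.adjoint_comp,
    ContinuousLinearMap.adjoint.dist_map]
  exact hKP

end IsHilbertSchmidt

end HilbertSchmidt

section KreinRutman

open scoped ComplexOrder NNReal

lemma tendsto_inv_smul_pow_of_spectralRadius_lt {A : Type*} [NormedRing A] [NormedAlgebra ℂ A]
    [CompleteSpace A] {a : A} {s : ℝ≥0} (hs : spectralRadius ℂ a < s) :
    Tendsto (fun n : ℕ ↦ ((s : ℂ)⁻¹ • a) ^ n) atTop (𝓝 0) := by
  obtain ⟨t, hat, hts⟩ := ENNReal.lt_iff_exists_nnreal_btwn.1 hs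
  have hts : (t : ℝ) < s := by exact_mod_cast hts
  have hpow : ∀ᶠ n : ℕ in atTop, ‖a ^ n‖ ≤ (t : ℝ) ^ n := by
    filter_upwards [(spectrum.pow_nnnorm_pow_one_div_tendsto_nhds_spectralRadius
      a).eventually_lt_const hat, eventually_gt_atTop 0] with n hn hn0
    rw [one_div, ENNReal.rpow_inv_lt_iff (by positivity), ENNReal.rpow_natCast] at hn
    exact_mod_cast hn.le
  have hgeom : Tendsto (fun n : ℕ ↦ (t / s : ℝ) ^ n) atTop (𝓝 0) :=
    tendsto_pow_atTop_nhds_zero_of_lt_one (by positivity)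
      ((div_lt_one (t.coe_nonneg.trans_lt hts)).2 hts)
  refine squeeze_zero_norm' (hpow.mono fun n hn ↦ ?_) hgeom
  calc ‖((s : ℂ)⁻¹ • a) ^ n‖ = (s : ℝ)⁻¹ ^ n * ‖a ^ n‖ := by simp [smul_pow, norm_smul]
    _ ≤ (s : ℝ)⁻¹ ^ n * (t : ℝ) ^ n := by gcongr
    _ = (t / s : ℝ) ^ n := by rw [div_pow, inv_pow, inv_mul_eq_div]

lemma exists_eigenvector_of_approx_eigenvectors {𝕜 E : Type*} [NontriviallyNormedField 𝕜]
    [NormedAddCommGroup E] [NormedSpace 𝕜 E] {T : E →L[𝕜] E} (hT : IsCompactOperator T) {z : 𝕜}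
    (hz : z ≠ 0) {C : Set E} (hC : IsClosed C)
    (happrox : ∀ δ > 0, ∃ x ∈ C, ‖x‖ = 1 ∧ ‖T x - z • x‖ ≤ δ) :
    ∃ v ∈ C, ‖v‖ = 1 ∧ T v = z • v := by
  choose x hxC hx hTx using fun n : ℕ ↦ happrox (1 / ((n : ℝ) + 1)) Nat.one_div_pos_of_nat
  obtain ⟨Q, hQ, hTQ⟩ :=
    IsCompactOperator.image_closedBall_subset_compact (f := (T : E →ₗ[𝕜] E)) hT 1
  obtain ⟨y, -, φ, hφ, hlim⟩ := hQ.tendsto_subseq (fun n ↦ hTQ ⟨x n, by simp [hx], rfl⟩)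
  have herr : Tendsto (fun n ↦ T (x n) - z • x n) atTop (𝓝 0) :=
    squeeze_zero_norm hTx tendsto_one_div_add_atTop_nhds_zero_nat
  have hxlim : Tendsto (fun n ↦ x (φ n)) atTop (𝓝 (z⁻¹ • y)) := by
    have h := (hlim.sub (herr.comp hφ.tendsto_atTop)).const_smul z⁻¹
    simpa [Function.comp_def, inv_smul_smul₀ hz] using h
  have hTlim : T (z⁻¹ • y) = y :=
    tendsto_nhds_unique ((T.continuous.tendsto _).comp hxlim) hlim
  refine ⟨z⁻¹ • y, hC.mem_of_tendsto hxlim (Eventually.of_forall fun n ↦ hxC _), ?_, ?_⟩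
  · exact tendsto_nhds_unique hxlim.norm (by simp [hx])
  · rw [hTlim, smul_inv_smul₀ hz]

variable {E : Type*} [NormedAddCommGroup E] [NormedSpace ℂ E] [CompleteSpace E] [PartialOrder E]
  [PosSMulMono ℂ E] [OrderClosedTopology E] {T : E →L[ℂ] E}

lemma nonneg_of_map_le_smul (hT : Monotone T) {s : ℝ≥0} (hs : spectralRadius ℂ T < s) {a : E}
    (ha : T a ≤ (s : ℂ) • a) : 0 ≤ a := by
  have hs0 : (s : ℂ) ≠ 0 := by
    have : s ≠ 0 := by rintro rfl; simp at hs
    exact_mod_cast this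
  have hsinv : (0 : ℂ) ≤ (s : ℂ)⁻¹ := by
    rw [← Complex.ofReal_inv, Complex.zero_le_real]
    positivity
  let B := (s : ℂ)⁻¹ • T
  have hB : Monotone B := fun x y hxy ↦ smul_le_smul_of_nonneg_left (hT hxy) hsinv
  have hBa : B a ≤ a := calc
    (s : ℂ)⁻¹ • T a ≤ (s : ℂ)⁻¹ • (s : ℂ) • a := smul_le_smul_of_nonneg_left ha hsinv
    _ = a := inv_smul_smul₀ hs0 a
  have hBpow (n : ℕ) : (B ^ n) a ≤ a := by
    simpa [FunLike.coe_pow_eq_iterate] using hB.antitone_iterate_of_map_le hBa n.zero_le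
  have hlim : Tendsto (fun n : ℕ ↦ (B ^ n) a) atTop (𝓝 0) := by
    simpa only [Function.comp_def, ContinuousLinearMap.apply_apply, map_zero] using
      ((ContinuousLinearMap.apply ℂ E a).continuous.tendsto 0).comp
        (tendsto_inv_smul_pow_of_spectralRadius_lt hs)
  exact le_of_tendsto' hlim hBpow

variable [IsOrderedAddMonoid E]

lemma exists_nonneg_smul_sub_map_eq (hT : Monotone T) {s : ℝ≥0} (hs : spectralRadius ℂ T < s)
    {g : E} (hg : 0 ≤ g) : ∃ a, 0 ≤ a ∧ (s : ℂ) • a - T a = g := by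
  have hunit : IsUnit (algebraMap ℂ (E →L[ℂ] E) s - T) :=
    spectrum.mem_resolventSet_of_spectralRadius_lt (by simpa using hs)
  obtain ⟨a, ha⟩ := (ContinuousLinearMap.isUnit_iff_bijective.1 hunit).surjective g
  replace ha : (s : ℂ) • a - T a = g := by simpa [Algebra.algebraMap_eq_smul_one] using ha
  exact ⟨a, nonneg_of_map_le_smul hT hs (sub_nonneg.1 (ha ▸ hg)), ha⟩

lemma le_spectralRadius_of_smul_le_map (hT : Monotone T) {c : ℝ≥0} {g : E} (hg : 0 ≤ g)
    (hg0 : g ≠ 0) (hTg : (c : ℂ) • g ≤ T g) : c ≤ spectralRadius ℂ T := by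
  by_contra! hc
  have hneg : 0 ≤ -g := nonneg_of_map_le_smul hT hc (by simpa using hTg)
  exact hg0 (le_antisymm (neg_nonneg.1 hneg) hg)

-- If `0 < φ g`, the last bound forces `‖a‖ → ∞` as `η → 0`.
lemma exists_nonneg_map_sub_smul_eq (hT : Monotone T) {l η : ℝ≥0} (hl : spectralRadius ℂ T = l)
    (hη : 0 < η) {φ : E →L[ℂ] ℂ} (hφ : ∀ a, 0 ≤ a → l * (φ a).re ≤ (φ (T a)).re) {g : E}
    (hg : 0 ≤ g) :
    ∃ a, 0 ≤ a ∧ T a - (l : ℂ) • a = (η : ℂ) • a - g ∧ (φ g).re ≤ η * (‖φ‖ * ‖a‖) := by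
  have hlη : spectralRadius ℂ T < (l + η : ℝ≥0) := by
    rw [hl]
    exact_mod_cast lt_add_of_pos_right l hη
  obtain ⟨a, ha, hag⟩ := exists_nonneg_smul_sub_map_eq hT hlη hg
  refine ⟨a, ha, ?_, ?_⟩
  · rw [← hag, NNReal.coe_add, Complex.ofReal_add, add_smul]
    abel
  · calc (φ g).re = (l + η) * (φ a).re - (φ (T a)).re := by
          rw [← hag, map_sub, map_smul, smul_eq_mul, Complex.sub_re, Complex.re_ofReal_mul,
            NNReal.coe_add]
      _ ≤ η * (φ a).re := by linarith [hφ a ha]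
      _ ≤ η * (‖φ‖ * ‖a‖) := by gcongr; exact (Complex.re_le_norm _).trans (φ.le_opNorm a)

lemma exists_nonneg_norm_map_sub_smul_le (hT : Monotone T) {l : ℝ≥0} (hl : spectralRadius ℂ T = l)
    {φ : E →L[ℂ] ℂ} (hφ : ∀ a, 0 ≤ a → l * (φ a).re ≤ (φ (T a)).re) {g : E} (hg : 0 ≤ g)
    (hφg : 0 < (φ g).re) {δ : ℝ} (hδ : 0 < δ) :
    ∃ x, 0 ≤ x ∧ ‖x‖ = 1 ∧ ‖T x - (l : ℂ) • x‖ ≤ δ := by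
  let C : ℝ := 1 + ‖g‖ * ‖φ‖ / (φ g).re
  have hC : 0 < C := by positivity
  obtain ⟨η, hη⟩ : ∃ η : ℝ≥0, (η : ℝ) = δ / C := ⟨⟨δ / C, by positivity⟩, rfl⟩
  have hη0 : 0 < η := by rw [← NNReal.coe_pos, hη]; positivity
  obtain ⟨a, ha, hTa, hblowup⟩ := exists_nonneg_map_sub_smul_eq hT hl hη0 hφ hg
  have ha0 : 0 < ‖a‖ := by
    refine norm_pos_iff.2 fun h ↦ hφg.not_ge ?_
    simpa [h] using hblowup
  refine ⟨((‖a‖⁻¹ : ℝ) : ℂ) • a,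
    smul_nonneg (Complex.zero_le_real.2 (by positivity)) ha, by simp [norm_smul, ha0.ne'], ?_⟩
  rw [map_smul, smul_comm, ← smul_sub, hTa, norm_smul, Complex.norm_real, norm_inv, norm_norm,
    inv_mul_le_iff₀ ha0]
  calc ‖(η : ℂ) • a - g‖ ≤ η * ‖a‖ + ‖g‖ := by
        refine (norm_sub_le _ _).trans_eq ?_
        rw [norm_smul, Complex.norm_real, NNReal.norm_eq]
    _ ≤ η * ‖a‖ + ‖g‖ * (η * (‖φ‖ * ‖a‖) / (φ g).re) := by
        gcongr
        exact le_mul_of_one_le_right (norm_nonneg g) ((one_le_div hφg).2 hblowup)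
    _ = η * C * ‖a‖ := by ring
    _ = ‖a‖ * δ := by rw [hη, div_mul_cancel₀ _ hC.ne', mul_comm]

theorem exists_nonneg_eigenvector (hTc : IsCompactOperator T) (hT : Monotone T) {l : ℝ≥0}
    (hl0 : l ≠ 0) (hl : spectralRadius ℂ T = l) {φ : E →L[ℂ] ℂ}
    (hφ : ∀ a, 0 ≤ a → l * (φ a).re ≤ (φ (T a)).re) {g : E} (hg : 0 ≤ g) (hφg : 0 < (φ g).re) :
    ∃ v, 0 ≤ v ∧ ‖v‖ = 1 ∧ T v = (l : ℂ) • v :=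
  exists_eigenvector_of_approx_eigenvectors hTc (by exact_mod_cast hl0) (isClosed_Ici (a := 0))
    fun _ hδ ↦ exists_nonneg_norm_map_sub_smul_le hT hl hφ hg hφg hδ

end KreinRutman

section OrderedHilbert

open scoped ComplexOrder InnerProductSpace

lemma map_eq_smul_of_smul_le_map {H : Type*} [NormedAddCommGroup H] [InnerProductSpace ℂ H]
    [CompleteSpace H] [PartialOrder H] [IsOrderedAddMonoid H] {K : H →L[ℂ] H} {l : ℝ} {v u : H}
    {n : ℕ} (hv : K.adjoint v = (l : ℂ) • v)
    (hpos : ∀ f, 0 ≤ f → f ≠ 0 → ⟪v, (K ^ n) f⟫_ℂ ≠ 0) (hu : (l : ℂ) • u ≤ K u) :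
    K u = (l : ℂ) • u := by
  have hinner (f : H) : ⟪v, K f⟫_ℂ = l * ⟪v, f⟫_ℂ := by
    rw [← ContinuousLinearMap.adjoint_inner_left, hv, inner_smul_left, Complex.conj_ofReal]
  have hinner_pow (m : ℕ) (f : H) : ⟪v, (K ^ m) f⟫_ℂ = l ^ m * ⟪v, f⟫_ℂ := by
    induction m generalizing f with
    | zero => simp
    | succ m ih => rw [pow_succ, mul_apply_eq_comp, ih, hinner]; ring
  by_contra hne
  refine hpos (K u - (l : ℂ) • u) (sub_nonneg.2 hu) (sub_ne_zero.2 hne) ?_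
  rw [hinner_pow, inner_sub_right, inner_smul_right, hinner, sub_self, mul_zero]

end OrderedHilbert

section Lp

open scoped ComplexOrder InnerProductSpace

variable {Ω : Type*} [MeasurableSpace Ω] {μ : Measure Ω}

instance instPosSMulMonoLp {𝕜 E : Type*} [NormedRing 𝕜] [Preorder 𝕜] [NormedAddCommGroup E]
    [PartialOrder E] [Module 𝕜 E] [IsBoundedSMul 𝕜 E] [PosSMulMono 𝕜 E] {p : ℝ≥0∞} :
    PosSMulMono 𝕜 (Lp E p μ) where
  smul_le_smul_of_nonneg_left c hc f g hfg := by
    rw [← Lp.coeFn_le] at hfg ⊢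
    filter_upwards [hfg, Lp.coeFn_smul c f, Lp.coeFn_smul c g] with x hx hcf hcg
    rw [hcf, hcg]
    exact smul_le_smul_of_nonneg_left hx hc

/-- The pointwise absolute value of an `Lp` function, as a complex-valued function. -/
def lpAbs {p : ℝ≥0∞} (f : Lp ℂ p μ) : Lp ℂ p μ := ((Lp.memLp f).norm.ofReal (K := ℂ)).toLp

section lpAbs

variable {p : ℝ≥0∞}

lemma coeFn_lpAbs (f : Lp ℂ p μ) : lpAbs f =ᵐ[μ] fun x ↦ (‖f x‖ : ℂ) := MemLp.coeFn_toLp _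

lemma lpAbs_nonneg (f : Lp ℂ p μ) : 0 ≤ lpAbs f := by
  rw [← Lp.coeFn_nonneg]
  filter_upwards [coeFn_lpAbs f] with x hx
  rw [hx]
  exact Complex.zero_le_real.2 (norm_nonneg _)

lemma norm_lpAbs (f : Lp ℂ p μ) : ‖lpAbs f‖ = ‖f‖ := by
  rw [Lp.norm_def, Lp.norm_def, eLpNorm_congr_ae (coeFn_lpAbs f)]
  congr 1
  exact eLpNorm_congr_norm_ae (Eventually.of_forall fun x ↦ by simp)

lemma lpAbs_smul (c : ℂ) (f : Lp ℂ p μ) : lpAbs (c • f) = (‖c‖ : ℂ) • lpAbs f := by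
  refine Lp.ext ?_
  filter_upwards [coeFn_lpAbs (c • f), coeFn_lpAbs f, Lp.coeFn_smul c f,
    Lp.coeFn_smul (‖c‖ : ℂ) (lpAbs f)] with x h₁ h₂ h₃ h₄
  rw [h₁, h₄, Pi.smul_apply, h₂, h₃, Pi.smul_apply, norm_smul, Complex.ofReal_mul, smul_eq_mul]

lemma lpAbs_pow_apply_eq [Fact (1 ≤ p)] {K : Lp ℂ p μ →L[ℂ] Lp ℂ p μ} {w : ℂ}
    {f : Lp ℂ p μ} (hf : K f = w • f)
    (hf' : K (lpAbs f) = (‖w‖ : ℂ) • lpAbs f) (n : ℕ) :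
    lpAbs ((K ^ n) f) = (K ^ n) (lpAbs f) := by
  have hpow {z : ℂ} {g : Lp ℂ p μ} (hg : K g = z • g) (n : ℕ) : (K ^ n) g = z ^ n • g := by
    induction n with
    | zero => simp
    | succ n ih => rw [pow_succ, mul_apply_eq_comp, hg, map_smul, ih, smul_smul, pow_succ']
  rw [hpow hf, hpow hf', lpAbs_smul, norm_pow, Complex.ofReal_pow]

end lpAbs

lemma indicatorConstLp_one_nonneg {p : ℝ≥0∞} {s : Set Ω} (hs : MeasurableSet s) (hμs : μ s ≠ ⊤) :
    (0 : Lp ℂ p μ) ≤ indicatorConstLp p hs hμs 1 := by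
  rw [← Lp.coeFn_nonneg]
  filter_upwards [indicatorConstLp_coeFn (p := p) (hs := hs) (hμs := hμs) (c := (1 : ℂ))] with x hx
  rw [hx]
  exact Set.indicator_nonneg (fun _ _ ↦ zero_le_one) x

lemma nonneg_of_forall_inner_nonneg {f : Lp ℂ 2 μ} (h : ∀ g, 0 ≤ g → 0 ≤ ⟪g, f⟫_ℂ) :
    0 ≤ f := by
  have hint {s : Set Ω} (_ : MeasurableSet s) (hμs : μ s < ⊤) : IntegrableOn f s μ :=
    integrableOn_Lp_of_measure_ne_top f (by norm_num) hμs.ne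
  have hset {s : Set Ω} (hs : MeasurableSet s) (hμs : μ s < ⊤) : 0 ≤ ∫ x in s, f x ∂μ := by
    rw [← L2.inner_indicatorConstLp_one (𝕜 := ℂ) hs hμs.ne]
    exact h _ (indicatorConstLp_one_nonneg hs hμs.ne)
  have hre : 0 ≤ᵐ[μ] fun x ↦ (f x).re :=
    ((Lp.memLp f).re.aefinStronglyMeasurable two_ne_zero
      ENNReal.ofNat_ne_top).ae_nonneg_of_forall_setIntegral_nonneg
      (fun s hs hμs ↦ (hint hs hμs).re) fun s hs hμs ↦ by
        simpa only [RCLike.re_to_complex] using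
          (integral_re (hint hs hμs)).symm ▸ (Complex.nonneg_iff.1 (hset hs hμs)).1
  have him : (fun x ↦ (f x).im) =ᵐ[μ] 0 :=
    ((Lp.memLp f).im.aefinStronglyMeasurable two_ne_zero
      ENNReal.ofNat_ne_top).ae_eq_zero_of_forall_setIntegral_eq_zero
      (fun s hs hμs ↦ (hint hs hμs).im) fun s hs hμs ↦ by
        simpa only [RCLike.im_to_complex] using
          (integral_im (hint hs hμs)).trans (Complex.nonneg_iff.1 (hset hs hμs)).2.symm
  rw [← Lp.coeFn_nonneg]
  filter_upwards [hre, him] with x hxre hxim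
  exact Complex.nonneg_iff.2 ⟨hxre, hxim.symm⟩

lemma inner_nonneg {f g : Lp ℂ 2 μ} (hf : 0 ≤ f) (hg : 0 ≤ g) : 0 ≤ ⟪f, g⟫_ℂ := by
  rw [← Lp.coeFn_nonneg] at hf hg
  rw [L2.inner_def]
  refine integral_nonneg_of_ae ?_
  filter_upwards [hf, hg] with x hfx hgx
  exact mul_nonneg hgx (star_nonneg_iff.2 hfx)

lemma monotone_adjoint {K : Lp ℂ 2 μ →L[ℂ] Lp ℂ 2 μ} (hK : Monotone K) :
    Monotone K.adjoint := by
  refine (monotone_iff_map_nonneg K.adjoint).2 fun f hf ↦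
    nonneg_of_forall_inner_nonneg fun g hg ↦ ?_
  rw [ContinuousLinearMap.adjoint_inner_right]
  exact inner_nonneg ((monotone_iff_map_nonneg K).1 hK g hg) hf

lemma ae_eq_zero_of_integral_eq_zero {h : Ω → ℂ} (hpos : 0 ≤ᵐ[μ] h) (hint : Integrable h μ)
    (hzero : ∫ x, h x ∂μ = 0) : h =ᵐ[μ] 0 := by
  have hre : (fun x ↦ (h x).re) =ᵐ[μ] 0 := by
    rw [← integral_eq_zero_iff_of_nonneg_ae (hpos.mono fun x hx ↦ (Complex.nonneg_iff.1 hx).1)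
      hint.re]
    exact (integral_re hint).trans (congrArg Complex.re hzero)
  filter_upwards [hpos, hre] with x hx hxre
  exact Complex.ext hxre (Complex.nonneg_iff.1 hx).2.symm

lemma eq_zero_of_inner_eq_zero_of_ae_pos {f g : Lp ℂ 2 μ} (hf : 0 ≤ f)
    (hg : ∀ᵐ x ∂μ, 0 < g x) (h : ⟪f, g⟫_ℂ = 0) : f = 0 := by
  rw [L2.inner_def] at h
  rw [← Lp.coeFn_nonneg] at hf
  have hae := ae_eq_zero_of_integral_eq_zero (by
    filter_upwards [hf, hg] with x hfx hgx
    exact mul_nonneg hgx.le (star_nonneg_iff.2 hfx)) (L2.integrable_inner f g) h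
  rw [Lp.eq_zero_iff_ae_eq_zero]
  filter_upwards [hae, hg] with x hx hgx
  exact star_eq_zero.1 ((mul_eq_zero.1 hx).resolve_left hgx.ne')

lemma exists_ae_norm_eq_mul_of_norm_integral_eq {h : Ω → ℂ} (hint : Integrable h μ)
    (heq : ‖∫ x, h x ∂μ‖ = ∫ x, ‖h x‖ ∂μ) : ∃ c : ℂ, ‖c‖ = 1 ∧ ∀ᵐ x ∂μ, ‖h x‖ = c * h x := by
  obtain ⟨c, hc, hcint⟩ := Complex.exists_norm_eq_mul_self (∫ x, h x ∂μ)
  have hnorm (x : Ω) : ‖c * h x‖ = ‖h x‖ := by rw [norm_mul, hc, one_mul]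
  have hre : ∫ x, (c * h x).re ∂μ = ∫ x, ‖h x‖ ∂μ := by
    rw [← heq, ← Complex.ofReal_re ‖∫ x, h x ∂μ‖, hcint, ← integral_const_mul]
    exact integral_re (hint.const_mul c)
  have hdefect : (fun x ↦ ‖h x‖ - (c * h x).re) =ᵐ[μ] 0 := by
    rw [← integral_eq_zero_iff_of_nonneg
      (fun x ↦ sub_nonneg.2 ((Complex.re_le_norm _).trans_eq (hnorm x)))
      (hint.norm.sub (hint.const_mul c).re)]
    exact (integral_sub hint.norm (hint.const_mul c).re).trans (sub_eq_zero.2 hre.symm)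
  refine ⟨c, hc, ?_⟩
  filter_upwards [hdefect] with x hx
  rw [← hnorm]
  refine Complex.norm_of_nonneg' (Complex.re_eq_norm.1 ?_)
  rw [hnorm]
  exact (sub_eq_zero.1 hx).symm

end Lp

section SquareIntegrable

open Function

variable {α β : Type*} [MeasurableSpace α] [MeasurableSpace β] {μ : Measure α} {ν : Measure β}

lemma norm_sq_eq_integral_norm_sq {E : Type*} [NormedAddCommGroup E] (f : Lp E 2 μ) :
    ‖f‖ ^ 2 = ∫ x, ‖f x‖ ^ 2 ∂μ := by
  have hint : 0 ≤ ∫ x, ‖f x‖ ^ 2 ∂μ := integral_nonneg fun x ↦ sq_nonneg _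
  rw [Lp.norm_def, (Lp.memLp f).eLpNorm_eq_integral_rpow_norm two_ne_zero ENNReal.ofNat_ne_top]
  simp only [ENNReal.toReal_ofNat, Real.rpow_two]
  rw [ENNReal.toReal_ofReal (Real.rpow_nonneg hint _), ← one_div, ← Real.sqrt_eq_rpow,
    Real.sq_sqrt hint]

lemma sq_integral_mul_le {f g : α → ℝ} (hf : MemLp f 2 μ) (hg : MemLp g 2 μ) :
    (∫ x, f x * g x ∂μ) ^ 2 ≤ (∫ x, f x ^ 2 ∂μ) * ∫ x, g x ^ 2 ∂μ := by
  have hinner {u v : α → ℝ} (hu : MemLp u 2 μ) (hv : MemLp v 2 μ) :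
      inner ℝ hv.toLp hu.toLp = ∫ x, u x * v x ∂μ := by
    rw [L2.inner_def]
    refine integral_congr_ae ?_
    filter_upwards [hu.coeFn_toLp, hv.coeFn_toLp] with x hux hvx
    rw [hux, hvx]
    rfl
  simpa only [hinner, pow_two, mul_comm] using real_inner_mul_inner_self_le hf.toLp hg.toLp

lemma memLp_two_mul_prod {f : α → ℂ} {g : β → ℂ} (hf : MemLp f 2 μ)
    (hg : MemLp g 2 ν) : MemLp (fun p : α × β ↦ f p.1 * g p.2) 2 (μ.prod ν) := by
  refine (memLp_two_iff_integrable_sq_norm (hf.1.comp_fst.mul hg.1.comp_snd)).2 ?_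
  simpa only [Pi.mul_apply, norm_mul, mul_pow] using
    ((memLp_two_iff_integrable_sq_norm hf.1).1 hf).mul_prod
      ((memLp_two_iff_integrable_sq_norm hg.1).1 hg)

lemma memLp_two_uncurry_of_lintegral_lt_top [SFinite ν] {k : α → β → ℝ}
    (hk : Measurable (uncurry k))
    (hL2 : ∫⁻ x, ∫⁻ y, ENNReal.ofReal (k x y ^ 2) ∂ν ∂μ < ⊤) :
    MemLp (uncurry k) 2 (μ.prod ν) := by
  refine (memLp_two_iff_integrable_sq hk.aestronglyMeasurable).2
    ⟨(hk.pow_const 2).aestronglyMeasurable, ?_⟩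
  rw [hasFiniteIntegral_iff_ofReal (.of_forall fun _ ↦ sq_nonneg _),
    lintegral_prod _ (hk.pow_const 2).ennreal_ofReal.aemeasurable]
  exact hL2

section Sections

variable [SFinite μ] [SFinite ν] {k : α → β → ℝ}

lemma ae_memLp_two_section_left (hk : MemLp (uncurry k) 2 (μ.prod ν)) :
    ∀ᵐ x ∂μ, MemLp (k x) 2 ν := by
  filter_upwards [hk.1.prodMk_left, hk.integrable_sq.prod_right_ae] with x hmeas hint
  exact (memLp_two_iff_integrable_sq hmeas).2 hint

lemma ae_memLp_two_section_right (hk : MemLp (uncurry k) 2 (μ.prod ν)) :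
    ∀ᵐ y ∂ν, MemLp (fun x ↦ k x y) 2 μ :=
  ae_memLp_two_section_left (k := fun y x ↦ k x y)
    (hk.comp_measurePreserving Measure.measurePreserving_swap)

end Sections

section Composition

variable {γ : Type*} [MeasurableSpace γ] {ξ : Measure γ} [SFinite ν] {k : α → β → ℝ}
  {l : β → γ → ℝ}

lemma measurable_integral_kernel_mul (hk : Measurable (uncurry k)) (hl : Measurable (uncurry l)) :
    Measurable (uncurry fun x y ↦ ∫ z, k x z * l z y ∂ν) :=
  (StronglyMeasurable.integral_prod_right'
    ((hk.comp (measurable_fst.fst.prodMk measurable_snd)).mul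
      (hl.comp (measurable_snd.prodMk measurable_fst.snd))).stronglyMeasurable).measurable

lemma memLp_two_integral_kernel_mul [SFinite μ] [SFinite ξ] (hk : Measurable (uncurry k))
    (hl : Measurable (uncurry l)) (hk₂ : MemLp (uncurry k) 2 (μ.prod ν))
    (hl₂ : MemLp (uncurry l) 2 (ν.prod ξ)) :
    MemLp (uncurry fun x y ↦ ∫ z, k x z * l z y ∂ν) 2 (μ.prod ξ) := by
  have hmeas := measurable_integral_kernel_mul (ν := ν) hk hl
  refine (memLp_two_iff_integrable_sq hmeas.aestronglyMeasurable).2 ?_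
  refine (hk₂.integrable_sq.integral_prod_left.mul_prod
    hl₂.integrable_sq.integral_prod_right).mono' (hmeas.pow_const 2).aestronglyMeasurable ?_
  filter_upwards [Measure.quasiMeasurePreserving_fst.ae (ae_memLp_two_section_left hk₂),
    Measure.quasiMeasurePreserving_snd.ae (ae_memLp_two_section_right hl₂)] with p hkp hlp
  rw [Real.norm_of_nonneg (sq_nonneg _)]
  exact sq_integral_mul_le hkp hlp

end Composition

end SquareIntegrable

section Kernel

open Function
open scoped ComplexOrder InnerProductSpace

variable {Ω : Type*} [MeasurableSpace Ω] {μ : Measure Ω}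

/-- `K` is the integral operator on `L²(μ)` with the measurable, square-integrable kernel `k`. -/
structure HasL2Kernel (K : Lp ℂ 2 μ →L[ℂ] Lp ℂ 2 μ) (k : Ω → Ω → ℝ) : Prop where
  measurable : Measurable (uncurry k)
  memLp : MemLp (uncurry k) 2 (μ.prod μ)
  apply_ae : ∀ f : Lp ℂ 2 μ, ∀ᵐ x ∂μ, K f x = ∫ y, (k x y : ℂ) * f y ∂μ

namespace HasL2Kernel

variable {K L : Lp ℂ 2 μ →L[ℂ] Lp ℂ 2 μ} {k l : Ω → Ω → ℝ}

section SigmaFinite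

variable [SigmaFinite μ]

lemma integrable_mul (hK : HasL2Kernel K k) (f : Lp ℂ 2 μ) :
    ∀ᵐ x ∂μ, Integrable (fun y ↦ (k x y : ℂ) * f y) μ := by
  filter_upwards [ae_memLp_two_section_left hK.memLp] with x hx
  exact hx.ofReal.integrable_mul (Lp.memLp f)

lemma sum_norm_sq_apply_le (hK : HasL2Kernel K k) {ι : Type*} [Fintype ι] {e : ι → Lp ℂ 2 μ}
    (he : Orthonormal ℂ e) : ∀ᵐ x ∂μ, ∑ i, ‖K (e i) x‖ ^ 2 ≤ ∫ y, k x y ^ 2 ∂μ := by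
  filter_upwards [ae_memLp_two_section_left hK.memLp, ae_all_iff.2 fun i ↦ hK.apply_ae (e i)]
    with x hx hKe
  have hkx : MemLp (fun y ↦ (k x y : ℂ)) 2 μ := hx.ofReal
  have hinner (i : ι) : ⟪hkx.toLp, e i⟫_ℂ = K (e i) x := by
    rw [hKe, L2.inner_def]
    refine integral_congr_ae ?_
    filter_upwards [hkx.coeFn_toLp] with y hy
    simp [hy, mul_comm]
  calc ∑ i, ‖K (e i) x‖ ^ 2 = ∑ i, ‖⟪e i, hkx.toLp⟫_ℂ‖ ^ 2 := by
        simp only [← hinner, norm_inner_symm]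
    _ ≤ ‖hkx.toLp‖ ^ 2 := he.sum_inner_products_le _
    _ = ∫ y, k x y ^ 2 ∂μ := by
        rw [norm_sq_eq_integral_norm_sq]
        refine integral_congr_ae ?_
        filter_upwards [hkx.coeFn_toLp] with y hy
        simp [hy]

lemma isHilbertSchmidt (hK : HasL2Kernel K k) : IsHilbertSchmidt K := by
  refine ⟨∫ x, ∫ y, k x y ^ 2 ∂μ ∂μ, fun n e he ↦ ?_⟩
  have hint (i : Fin n) : Integrable (fun x ↦ ‖K (e i) x‖ ^ 2) μ :=
    (memLp_two_iff_integrable_sq_norm (Lp.aestronglyMeasurable _)).1 (Lp.memLp _)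
  simp only [norm_sq_eq_integral_norm_sq]
  rw [← integral_finsetSum _ fun i _ ↦ hint i]
  exact integral_mono_ae (integrable_finsetSum _ fun i _ ↦ hint i)
    hK.memLp.integrable_sq.integral_prod_left (hK.sum_norm_sq_apply_le he)

lemma comp (hK : HasL2Kernel K k) (hL : HasL2Kernel L l) :
    HasL2Kernel (K * L) fun x y ↦ ∫ z, k x z * l z y ∂μ where
  measurable := measurable_integral_kernel_mul hK.measurable hL.measurable
  memLp := memLp_two_integral_kernel_mul hK.measurable hL.measurable hK.memLp hL.memLp
  apply_ae f := by
    filter_upwards [hK.apply_ae (L f), ae_memLp_two_section_left hK.memLp] with x hKx hkx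
    have hint : Integrable (uncurry fun z y ↦ (k x z * f y) * (l z y : ℂ)) (μ.prod μ) :=
      (memLp_two_mul_prod hkx.ofReal (Lp.memLp f)).integrable_mul hL.memLp.ofReal
    calc (K * L) f x = ∫ z, (k x z : ℂ) * L f z ∂μ := hKx
      _ = ∫ z, ∫ y, (k x z * f y) * (l z y : ℂ) ∂μ ∂μ := by
          refine integral_congr_ae ?_
          filter_upwards [hL.apply_ae f] with z hz
          rw [hz, ← integral_const_mul]
          exact integral_congr_ae (.of_forall fun y ↦ by ring)
      _ = ∫ y, ∫ z, (k x z * f y) * (l z y : ℂ) ∂μ ∂μ := integral_integral_swap hint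
      _ = ∫ y, ((∫ z, k x z * l z y ∂μ : ℝ) : ℂ) * f y ∂μ := by
          refine integral_congr_ae (.of_forall fun y ↦ ?_)
          simp only [← integral_complex_ofReal, ← integral_mul_const, Complex.ofReal_mul]
          exact integral_congr_ae (.of_forall fun z ↦ by ring)

protected lemma pow (hK : HasL2Kernel K k) (n : ℕ) :
    HasL2Kernel (K ^ (n + 1)) (iterKernel μ k n) := by
  induction n with
  | zero => rwa [zero_add, pow_one]
  | succ n ih => exact pow_succ K (n + 1) ▸ ih.comp hK

end SigmaFinite

lemma apply_lpAbs_ae (hK : HasL2Kernel K k) (hk : ∀ x y, 0 ≤ k x y) (f : Lp ℂ 2 μ) :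
    ∀ᵐ x ∂μ, K (lpAbs f) x = (∫ y, ‖(k x y : ℂ) * f y‖ ∂μ : ℝ) := by
  filter_upwards [hK.apply_ae (lpAbs f)] with x hx
  rw [hx, ← integral_complex_ofReal]
  refine integral_congr_ae ?_
  filter_upwards [coeFn_lpAbs f] with y hy
  rw [hy, norm_mul, Complex.norm_real, Real.norm_of_nonneg (hk x y), Complex.ofReal_mul]

lemma lpAbs_apply_le (hK : HasL2Kernel K k) (hk : ∀ x y, 0 ≤ k x y) (f : Lp ℂ 2 μ) :
    lpAbs (K f) ≤ K (lpAbs f) := by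
  rw [← Lp.coeFn_le]
  filter_upwards [hK.apply_lpAbs_ae hk f, hK.apply_ae f, coeFn_lpAbs (K f)] with x hKabs hKf habs
  rw [hKabs, habs, hKf]
  exact Complex.real_le_real.2 (norm_integral_le_integral_norm _)

lemma monotone (hK : HasL2Kernel K k) (hk : ∀ x y, 0 ≤ k x y) : Monotone K := by
  refine (monotone_iff_map_nonneg K).2 fun f hf ↦ ?_
  rw [← Lp.coeFn_nonneg] at hf ⊢
  filter_upwards [hK.apply_ae f] with x hx
  rw [hx]
  exact integral_nonneg_of_ae (hf.mono fun y hy ↦ mul_nonneg (Complex.zero_le_real.2 (hk x y)) hy)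

section StrictlyPositive

variable [SigmaFinite μ]

lemma ae_pos_apply (hK : HasL2Kernel K k) (hk : ∀ x y, 0 < k x y) {f : Lp ℂ 2 μ} (hf : 0 ≤ f)
    (hf0 : f ≠ 0) : ∀ᵐ x ∂μ, 0 < K f x := by
  rw [← Lp.coeFn_nonneg] at hf
  filter_upwards [hK.apply_ae f, hK.integrable_mul f] with x hx hint
  have hnonneg : 0 ≤ᵐ[μ] fun y ↦ (k x y : ℂ) * f y :=
    hf.mono fun y hy ↦ mul_nonneg (Complex.zero_le_real.2 (hk x y).le) hy
  rw [hx]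
  refine (integral_nonneg_of_ae hnonneg).lt_of_ne' fun hzero ↦ hf0 ?_
  rw [Lp.eq_zero_iff_ae_eq_zero]
  filter_upwards [ae_eq_zero_of_integral_eq_zero hnonneg hint hzero] with y hy
  exact (mul_eq_zero.1 hy).resolve_left (Complex.ofReal_ne_zero.2 (hk x y).ne')

lemma inner_apply_ne_zero (hK : HasL2Kernel K k) (hk : ∀ x y, 0 < k x y) {f g : Lp ℂ 2 μ}
    (hf : 0 ≤ f) (hf0 : f ≠ 0) (hg : 0 ≤ g) (hg0 : g ≠ 0) : ⟪g, K f⟫_ℂ ≠ 0 :=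
  fun h ↦ hg0 (eq_zero_of_inner_eq_zero_of_ae_pos hg (hK.ae_pos_apply hk hf hf0) h)

lemma exists_lpAbs_eq_smul [NeZero μ] (hK : HasL2Kernel K k) (hk : ∀ x y, 0 < k x y)
    {f : Lp ℂ 2 μ} (hf : lpAbs (K f) = K (lpAbs f)) : ∃ c : ℂ, lpAbs f = c • f := by
  obtain ⟨x, hint, hKf, hKabs, habs⟩ := ((hK.integrable_mul f).and <| (hK.apply_ae f).and <|
    (hK.apply_lpAbs_ae (fun x y ↦ (hk x y).le) f).and (coeFn_lpAbs (K f))).exists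
  rw [hf, hKabs, Complex.ofReal_inj, hKf] at habs
  obtain ⟨c, -, hc⟩ := exists_ae_norm_eq_mul_of_norm_integral_eq hint habs.symm
  refine ⟨c, Lp.ext ?_⟩
  filter_upwards [hc, coeFn_lpAbs f, Lp.coeFn_smul c f] with y hy hfy hcy
  have hky : (k x y : ℂ) ≠ 0 := Complex.ofReal_ne_zero.2 (hk x y).ne'
  rw [norm_mul, Complex.norm_real, Real.norm_of_nonneg (hk x y).le, Complex.ofReal_mul,
    mul_left_comm] at hy
  rw [hfy, hcy]
  exact mul_left_cancel₀ hky hy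

end StrictlyPositive

end HasL2Kernel

end Kernel

section StrictlyPositiveKernel

open Function
open scoped ComplexOrder NNReal

variable {Ω : Type*} [MeasurableSpace Ω] {μ : Measure Ω} {k : Ω → Ω → ℝ}

lemma tendsto_measureReal_setOf_lt_inv_succ {α : Type*} [MeasurableSpace α] {ν : Measure α}
    [IsFiniteMeasure ν] {f : α → ℝ} (hf : Measurable f) (hpos : ∀ a, 0 < f a) :
    Tendsto (fun n : ℕ ↦ ν.real {a | f a < 1 / (n + 1)}) atTop (𝓝 0) := by
  have hempty : ⋂ n : ℕ, {a | f a < 1 / ((n : ℝ) + 1)} = ∅ :=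
    Set.eq_empty_of_forall_notMem fun a ha ↦
      (exists_nat_one_div_lt (hpos a)).elim fun n hn ↦ hn.not_gt (Set.mem_iInter.1 ha n)
  have hanti : Antitone fun n : ℕ ↦ {a | f a < 1 / ((n : ℝ) + 1)} :=
    fun m n hmn a (ha : f a < 1 / (n + 1)) ↦ ha.trans_le (Nat.one_div_le_one_div hmn)
  have hlim := tendsto_measure_iInter_atTop (μ := ν)
    (fun n ↦ (measurableSet_lt hf measurable_const).nullMeasurableSet) hanti
    ⟨0, measure_ne_top _ _⟩
  rw [hempty, measure_empty] at hlim
  exact (ENNReal.tendsto_toReal ENNReal.zero_ne_top).comp hlim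

lemma mul_measureReal_section_ge_le {α β : Type*} [MeasurableSpace α] [MeasurableSpace β]
    {ν : Measure α} {ξ : Measure β} [IsFiniteMeasure ν] [IsFiniteMeasure ξ] {E : Set (α × β)}
    (hE : MeasurableSet E) (δ : ℝ) :
    δ * ν.real {x | δ ≤ ξ.real (Prod.mk x ⁻¹' E)} ≤ (ν.prod ξ).real E := by
  have hmeas := measurable_measure_prodMk_left (ν := ξ) hE
  have hint : Integrable (fun x ↦ ξ.real (Prod.mk x ⁻¹' E)) ν :=
    Integrable.of_bound hmeas.ennreal_toReal.aestronglyMeasurable (ξ.real Set.univ)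
      (.of_forall fun x ↦ by
        rw [Real.norm_of_nonneg measureReal_nonneg]
        exact measureReal_mono (Set.subset_univ _))
  calc δ * ν.real {x | δ ≤ ξ.real (Prod.mk x ⁻¹' E)} ≤ ∫ x, ξ.real (Prod.mk x ⁻¹' E) ∂ν :=
        mul_meas_ge_le_integral_of_nonneg (.of_forall fun _ ↦ measureReal_nonneg) hint δ
    _ = (ν.prod ξ).real E := by
        rw [measureReal_def (ν.prod ξ), Measure.prod_apply hE]
        exact integral_toReal hmeas.aemeasurable (.of_forall fun _ ↦ measure_lt_top _ _)

lemma exists_le_measureReal_restrict_of_isFiniteMeasure {ν : Measure Ω} [IsFiniteMeasure ν]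
    [NeZero ν] (hk : Measurable (uncurry k)) (hpos : ∀ x y, 0 < k x y) :
    ∃ A, MeasurableSet A ∧ 0 < ν A ∧ ∃ ε > 0, ∃ δ > 0, ∀ x ∈ A,
      δ ≤ (ν.restrict A).real {y | ε ≤ k x y} := by
  -- Discarding `Aᶜ` and one small section costs less than `2 δ` of the total mass `4 δ`.
  set δ := ν.real Set.univ / 4
  have hδ : 0 < δ := by
    have := measureReal_univ_pos (μ := ν)
    positivity
  obtain ⟨n, hn⟩ := ((tendsto_measureReal_setOf_lt_inv_succ (ν := ν.prod ν) hk
    fun q ↦ hpos q.1 q.2).eventually_lt_const (mul_pos hδ hδ)).exists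
  set ε : ℝ := 1 / (n + 1)
  have hε : 0 < ε := Nat.one_div_pos_of_nat
  let A : Set Ω := {x | ν.real {y | k x y < ε} < δ}
  have hsmall : MeasurableSet {q : Ω × Ω | uncurry k q < ε} := measurableSet_lt hk measurable_const
  have hA : MeasurableSet A :=
    measurableSet_lt (measurable_measure_prodMk_left hsmall).ennreal_toReal measurable_const
  have hAc : ν.real Aᶜ < δ := by
    have hcompl : Aᶜ = {x | δ ≤ ν.real {y | k x y < ε}} := by ext x; simp [A]
    rw [hcompl]
    exact lt_of_mul_lt_mul_left ((mul_measureReal_section_ge_le hsmall δ).trans_lt hn) hδ.le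
  have htotal : ν.real A + ν.real Aᶜ = 4 * δ := by
    rw [measureReal_add_measureReal_compl hA]; ring
  have hApos : ν A ≠ 0 := fun h ↦ by
    rw [measureReal_def, h, ENNReal.toReal_zero] at htotal; linarith
  refine ⟨A, hA, hApos.bot_lt, ε, hε, δ, hδ, fun x hx ↦ ?_⟩
  rw [measureReal_restrict_apply' hA]
  have hcover : A ⊆ {y | k x y < ε} ∪ ({y | ε ≤ k x y} ∩ A) := fun y hy ↦
    (lt_or_ge (k x y) ε).imp id fun h ↦ ⟨h, hy⟩
  have hle := (measureReal_mono hcover).trans (measureReal_union_le (μ := ν) _ _)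
  have hx : ν.real {y | k x y < ε} < δ := hx
  linarith

lemma exists_le_measureReal_restrict [SigmaFinite μ] [NeZero μ] (hk : Measurable (uncurry k))
    (hpos : ∀ x y, 0 < k x y) :
    ∃ A, MeasurableSet A ∧ 0 < μ A ∧ μ A < ⊤ ∧ ∃ ε > 0, ∃ δ > 0, ∀ x ∈ A,
      δ ≤ (μ.restrict A).real {y | ε ≤ k x y} := by
  obtain ⟨B, hB, -, hBpos, hBfin⟩ :=
    μ.exists_subset_measure_lt_top MeasurableSet.univ (Measure.measure_univ_pos.2 (NeZero.ne μ))
  have : IsFiniteMeasure (μ.restrict B) := ⟨by rwa [Measure.restrict_apply_univ]⟩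
  have : NeZero (μ.restrict B) := ⟨mt Measure.restrict_eq_zero.1 hBpos.ne'⟩
  obtain ⟨A, hA, hApos, ε, hε, δ, hδ, hAδ⟩ :=
    exists_le_measureReal_restrict_of_isFiniteMeasure (ν := μ.restrict B) hk hpos
  rw [Measure.restrict_apply hA] at hApos
  refine ⟨A ∩ B, hA.inter hB, hApos, (measure_mono Set.inter_subset_right).trans_lt hBfin,
    ε, hε, δ, hδ, fun x hx ↦ ?_⟩
  rw [← Measure.restrict_restrict hA]
  exact hAδ x hx.1

lemma HasL2Kernel.apply_indicatorConstLp_ae {K : Lp ℂ 2 μ →L[ℂ] Lp ℂ 2 μ} (hK : HasL2Kernel K k)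
    {A : Set Ω} (hA : MeasurableSet A) (hμA : μ A ≠ ⊤) :
    ∀ᵐ x ∂μ, K (indicatorConstLp 2 hA hμA 1) x = (∫ y in A, k x y ∂μ : ℝ) := by
  filter_upwards [hK.apply_ae (indicatorConstLp 2 hA hμA 1)] with x hx
  rw [hx, ← integral_complex_ofReal, ← integral_indicator hA]
  refine integral_congr_ae ?_
  filter_upwards [indicatorConstLp_coeFn (hs := hA) (hμs := hμA) (c := (1 : ℂ)) (p := 2)] with y hy
  rw [hy]
  by_cases hyA : y ∈ A <;> simp [hyA]

lemma HasL2Kernel.exists_pos_smul_le_apply [SigmaFinite μ] [NeZero μ]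
    {K : Lp ℂ 2 μ →L[ℂ] Lp ℂ 2 μ} (hK : HasL2Kernel K k) (hk : ∀ x y, 0 < k x y) :
    ∃ g : Lp ℂ 2 μ, 0 ≤ g ∧ g ≠ 0 ∧ ∃ c : ℝ≥0, 0 < c ∧ (c : ℂ) • g ≤ K g := by
  obtain ⟨A, hA, hApos, hAfin, ε, hε, δ, hδ, hAδ⟩ :=
    exists_le_measureReal_restrict (μ := μ) hK.measurable hk
  have hmass {x : Ω} (hx : x ∈ A) (hkx : MemLp (k x) 2 μ) : ε * δ ≤ ∫ y in A, k x y ∂μ := by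
    have : IsFiniteMeasure (μ.restrict A) := ⟨by rwa [Measure.restrict_apply_univ]⟩
    refine (mul_le_mul_of_nonneg_left (hAδ x hx) hε.le).trans ?_
    exact mul_meas_ge_le_integral_of_nonneg (.of_forall fun y ↦ (hk x y).le)
      ((hkx.restrict A).integrable one_le_two) ε
  have hg : indicatorConstLp 2 hA hAfin.ne 1 =ᵐ[μ] A.indicator fun _ ↦ (1 : ℂ) :=
    indicatorConstLp_coeFn
  refine ⟨indicatorConstLp 2 hA hAfin.ne 1, indicatorConstLp_one_nonneg hA hAfin.ne, ?_,
    ⟨ε * δ, by positivity⟩, mul_pos hε hδ, ?_⟩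
  · rw [← norm_ne_zero_iff, norm_indicatorConstLp two_ne_zero ENNReal.ofNat_ne_top, norm_one,
      one_mul]
    exact (Real.rpow_pos_of_pos (ENNReal.toReal_pos hApos.ne' hAfin.ne) _).ne'
  · rw [← Lp.coeFn_le]
    filter_upwards [hg, Lp.coeFn_smul ((ε * δ : ℝ) : ℂ) (indicatorConstLp 2 hA hAfin.ne (1 : ℂ)),
      hK.apply_indicatorConstLp_ae hA hAfin.ne, ae_memLp_two_section_left hK.memLp]
      with x hgx hcx hKx hkx
    refine (hcx.trans ?_).trans_le (?_ : ((ε * δ : ℝ) : ℂ) * A.indicator (fun _ ↦ 1) x ≤ _)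
    · rw [Pi.smul_apply, hgx, smul_eq_mul]
    rw [hKx]
    by_cases hxA : x ∈ A
    · rw [Set.indicator_of_mem hxA, mul_one]
      exact Complex.real_le_real.2 (hmass hxA hkx)
    · rw [Set.indicator_of_notMem hxA, mul_zero]
      exact Complex.zero_le_real.2 (integral_nonneg fun y ↦ (hk x y).le)

lemma HasL2Kernel.spectralRadius_pos [SigmaFinite μ] [NeZero μ] {K : Lp ℂ 2 μ →L[ℂ] Lp ℂ 2 μ}
    (hK : HasL2Kernel K k) (hk : ∀ x y, 0 < k x y) : 0 < spectralRadius ℂ K := by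
  obtain ⟨g, hg, hg0, c, hc, hgK⟩ := hK.exists_pos_smul_le_apply hk
  exact (ENNReal.coe_pos.2 hc).trans_le
    (le_spectralRadius_of_smul_le_map (hK.monotone fun x y ↦ (hk x y).le) hg hg0 hgK)

end StrictlyPositiveKernel

section PeripheralSpectrum

open scoped ComplexOrder NNReal

variable {Ω : Type*} [MeasurableSpace Ω] {μ : Measure Ω} [SigmaFinite μ] {k : Ω → Ω → ℝ}
  {K : Lp ℂ 2 μ →L[ℂ] Lp ℂ 2 μ} {l : ℝ≥0}

namespace HasL2Kernel

lemma exists_nonneg_adjoint_eigenvector (hK : HasL2Kernel K k) (hk : ∀ x y, 0 ≤ k x y)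
    (hl0 : l ≠ 0) (hl : spectralRadius ℂ K = l) {u : Lp ℂ 2 μ} (hu : 0 ≤ u) (hu0 : u ≠ 0)
    (huK : (l : ℂ) • u ≤ K u) : ∃ v, 0 ≤ v ∧ v ≠ 0 ∧ K.adjoint v = (l : ℂ) • v := by
  have hφ (a : Lp ℂ 2 μ) (ha : 0 ≤ a) :
      l * (innerSL ℂ u a).re ≤ (innerSL ℂ u (K.adjoint a)).re := by
    rw [innerSL_apply_apply, innerSL_apply_apply, ContinuousLinearMap.adjoint_inner_right]
    have hinner := inner_nonneg (sub_nonneg.2 huK) ha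
    rw [inner_sub_left, inner_smul_left, Complex.conj_ofReal, sub_nonneg] at hinner
    simpa using (Complex.le_def.1 hinner).1
  obtain ⟨v, hv, hvnorm, hKv⟩ := exists_nonneg_eigenvector
    hK.isHilbertSchmidt.isCompactOperator_adjoint (monotone_adjoint (hK.monotone hk)) hl0
    ((spectralRadius_star K).trans hl) hφ hu (by
      simpa [← Complex.ofReal_pow] using pow_pos (norm_pos_iff.2 hu0) 2)
  exact ⟨v, hv, norm_ne_zero_iff.1 (by simp [hvnorm]), hKv⟩

lemma apply_eq_smul_of_smul_le_apply (hK : HasL2Kernel K k) (hk : ∀ x y, 0 ≤ k x y) {N : ℕ}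
    (hprim : ∀ x y, 0 < iterKernel μ k N x y) (hl0 : l ≠ 0) (hl : spectralRadius ℂ K = l)
    {u : Lp ℂ 2 μ} (hu : 0 ≤ u) (hu0 : u ≠ 0) (huK : (l : ℂ) • u ≤ K u) :
    K u = (l : ℂ) • u := by
  obtain ⟨v, hv, hv0, hKv⟩ := hK.exists_nonneg_adjoint_eigenvector hk hl0 hl hu hu0 huK
  exact map_eq_smul_of_smul_le_map hKv
    (fun f hf hf0 ↦ (hK.pow N).inner_apply_ne_zero hprim hf hf0 hv hv0) huK

theorem eq_of_mem_spectrum_of_norm_eq [NeZero μ] (hK : HasL2Kernel K k) (hk : ∀ x y, 0 ≤ k x y)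
    {N : ℕ} (hprim : ∀ x y, 0 < iterKernel μ k N x y) (hl0 : l ≠ 0)
    (hl : spectralRadius ℂ K = l) {w : ℂ} (hw : w ∈ spectrum ℂ K) (hwl : ‖w‖ = l) :
    w = (l : ℂ) := by
  have hw0 : w ≠ 0 := norm_ne_zero_iff.1 (hwl ▸ NNReal.coe_ne_zero.2 hl0)
  obtain ⟨f, hKf, hf0⟩ :=
    ((hK.isHilbertSchmidt.isCompactOperator.hasEigenvalue_iff_mem_spectrum hw0).2
      hw).exists_hasEigenvector
  replace hKf : K f = w • f := Module.End.mem_eigenspace_iff.1 hKf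
  have habs0 : lpAbs f ≠ 0 := by rwa [← norm_ne_zero_iff, norm_lpAbs, norm_ne_zero_iff]
  have hKabs : K (lpAbs f) = (l : ℂ) • lpAbs f :=
    hK.apply_eq_smul_of_smul_le_apply hk hprim hl0 hl (lpAbs_nonneg f) habs0 <| by
      rw [← hwl, ← lpAbs_smul, ← hKf]
      exact hK.lpAbs_apply_le hk f
  obtain ⟨c, hc⟩ := (hK.pow N).exists_lpAbs_eq_smul hprim
    (lpAbs_pow_apply_eq hKf (hwl ▸ hKabs) _)
  refine smul_left_injective ℂ habs0 (?_ : w • lpAbs f = (l : ℂ) • lpAbs f)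
  rw [← hKabs, hc, map_smul, hKf, smul_comm]

theorem spectralRadius_pos_of_iterKernel_pos [NeZero μ] (hK : HasL2Kernel K k) {N : ℕ}
    (hprim : ∀ x y, 0 < iterKernel μ k N x y) : 0 < spectralRadius ℂ K :=
  spectralRadius_pos_of_pow N.succ_ne_zero ((hK.pow N).spectralRadius_pos hprim)

end HasL2Kernel

end PeripheralSpectrum

theorem statement18_general {Ω : Type*} [MeasurableSpace Ω] {μ : Measure Ω} [SigmaFinite μ]
    [NeZero μ] {k : Ω → Ω → ℝ} {K : Lp ℂ 2 μ →L[ℂ] Lp ℂ 2 μ} (hK : HasL2Kernel K k)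
    (hpos : ∀ x y, 0 ≤ k x y) (hprim : ∃ N : ℕ, ∀ x y, 0 < iterKernel μ k N x y) :
    (∀ z ∈ spectrum ℂ K, z ≠ ((spectralRadius ℂ K).toReal : ℂ) →
      ‖z‖ < (spectralRadius ℂ K).toReal) ∧
    ∃ r : ℝ, r < (spectralRadius ℂ K).toReal ∧
      ∀ z ∈ spectrum ℂ K, z ≠ ((spectralRadius ℂ K).toReal : ℂ) → ‖z‖ ≤ r := by
  obtain ⟨N, hN⟩ := hprim
  have hrad_pos := hK.spectralRadius_pos_of_iterKernel_pos hN
  lift spectralRadius ℂ K to NNReal using spectralRadius_ne_top K with l hl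
  have hl0 : l ≠ 0 := (ENNReal.coe_pos.1 hrad_pos).ne'
  have hlt (z : ℂ) (hz : z ∈ spectrum ℂ K) (hzl : z ≠ (l : ℂ)) : ‖z‖ < l := by
    have hle : ‖z‖ ≤ l := by exact_mod_cast hl ▸ nnnorm_le_spectralRadius hz
    exact hle.lt_of_ne fun h ↦ hzl (hK.eq_of_mem_spectrum_of_norm_eq hpos hN hl0 hl.symm hz h)
  obtain ⟨r, hr, hgap⟩ := exists_lt_forall_norm_le_of_subset_spectrum
    hK.isHilbertSchmidt.isCompactOperator (s := {z ∈ spectrum ℂ K | z ≠ (l : ℂ)})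
    (fun z hz ↦ hz.1) (ρ := l) (by positivity) fun z hz ↦ hlt z hz.1 hz.2
  exact ⟨hlt, r, hr, fun z hz hzl ↦ hgap z ⟨hz, hzl⟩⟩

/-- every spectral value `z ≠ λ` of `K` satisfies `|z| < λ`, and there is a
uniform spectral gap: `sup{|z| : z ∈ σ(K) ∖ {λ}} < λ`. -/
theorem statement18 {Ω : Type*} [MeasurableSpace Ω]
    (μ : Measure Ω) [SigmaFinite μ]
    (k : Ω → Ω → ℝ) (hkmeas : Measurable (Function.uncurry k))
    (hL2 : ∫⁻ x, ∫⁻ y, ENNReal.ofReal (k x y ^ 2) ∂μ ∂μ < ⊤)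
    (hpos : ∀ x y, 0 ≤ k x y)
    (S : Set Ω) (hS : MeasurableSet S) (hμS : 0 < μ S)
    (ε : ℝ) (hε : 0 < ε) (hkS : ∀ x ∈ S, ∀ y ∈ S, ε ≤ k x y)
    (hprim : ∃ N : ℕ, ∀ x y, 0 < iterKernel μ k N x y)
    (K : Lp ℂ 2 μ →L[ℂ] Lp ℂ 2 μ)
    (hK : ∀ f : Lp ℂ 2 μ, ∀ᵐ x ∂μ, (K f : Lp ℂ 2 μ) x = ∫ y, (k x y : ℂ) * f y ∂μ) :
    (∀ z ∈ spectrum ℂ K, z ≠ ((spectralRadius ℂ K).toReal : ℂ) →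
      ‖z‖ < (spectralRadius ℂ K).toReal) ∧
    ∃ r : ℝ, r < (spectralRadius ℂ K).toReal ∧
      ∀ z ∈ spectrum ℂ K, z ≠ ((spectralRadius ℂ K).toReal : ℂ) → ‖z‖ ≤ r := by
  have : NeZero μ := ⟨by rintro rfl; simp at hμS⟩
  exact statement18_general
    ⟨hkmeas, memLp_two_uncurry_of_lintegral_lt_top hkmeas hL2, hK⟩ hpos hprim

end
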